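/- Let n ≥ 3 be a positive integer that is not a prime power. Then the difference graph of the dihedral group D_{2n} of order 2n is isomorphic (as a graph) to the difference graph of the cyclic group Z_n. -/

import Mathlib

/-- Adjacency in the difference of the enhanced power graph and the power graph:
`⟨x, y⟩` is cyclic but neither of `x`, `y` is a power of the other. -/
def diffAdj {G : Type*} [Group G] (x y : G) : Prop :=
  IsCyclic (Subgroup.closure ({x, y} : Set G)) ∧
    (¬ ∃ k : ℤ, y = x ^ k) ∧ (¬ ∃ k : ℤ, x = y ^ k)

/-- The vertex set of the difference graph `𝒟(G)`: the elements of `G` that are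
non-isolated in the difference of the enhanced power graph and the power graph. -/
abbrev DiffVertex (G : Type*) [Group G] := {x : G // ∃ y, diffAdj x y}

/-- The difference graph `𝒟(G)` of a group `G`. -/
def diffGraph (G : Type*) [Group G] : SimpleGraph (DiffVertex G) :=
  SimpleGraph.fromRel (fun a b => diffAdj a.val b.val)

/-- A dominating set of a graph: every vertex is in `S` or adjacent to a vertex of `S`. -/
def IsDominatingSet {V : Type*} (Γ : SimpleGraph V) (S : Set V) : Prop :=
  ∀ v : V, v ∈ S ∨ ∃ u ∈ S, Γ.Adj u v

/-- The domination number of a graph: the least size of a dominating set. -/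
noncomputable def dominationNumber {V : Type*} (Γ : SimpleGraph V) : ℕ :=
  sInf {n : ℕ | ∃ S : Set V, IsDominatingSet Γ S ∧ S.ncard = n}

/-- A maximal cyclic subgroup: a cyclic subgroup not properly contained in
another cyclic subgroup. -/
def IsMaxCyclic {G : Type*} [Group G] (C : Subgroup G) : Prop :=
  IsCyclic C ∧ ∀ D : Subgroup G, IsCyclic D → C ≤ D → C = D

theorem isCyclic_closure_of_mem {G : Type*} [Group G] {x y g : G}
    (hx : x ∈ Subgroup.zpowers g) (hy : y ∈ Subgroup.zpowers g) :
    IsCyclic (Subgroup.closure ({x, y} : Set G)) := by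
  have hle : Subgroup.closure ({x, y} : Set G) ≤ Subgroup.zpowers g := by
    rw [Subgroup.closure_le]
    rintro z (rfl | rfl)
    · exact hx
    · exact hy
  exact isCyclic_of_injective (Subgroup.inclusion hle) (Subgroup.inclusion_injective hle)

theorem exists_gen_of_isCyclic {G : Type*} [Group G] {x y : G}
    (h : IsCyclic (Subgroup.closure ({x, y} : Set G))) :
    ∃ g : G, (∃ k : ℤ, g ^ k = x) ∧ (∃ k : ℤ, g ^ k = y) := by
  obtain ⟨⟨g, hg⟩, h⟩ := h
  refine ⟨g, ?_, ?_⟩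
  · obtain ⟨k, hk⟩ := h ⟨x, Subgroup.subset_closure (by simp)⟩
    exact ⟨k, by simpa using congrArg Subtype.val hk⟩
  · obtain ⟨k, hk⟩ := h ⟨y, Subgroup.subset_closure (by simp)⟩
    exact ⟨k, by simpa using congrArg Subtype.val hk⟩

theorem not_diffAdj_sr {n : ℕ} (i : ZMod n) (y : DihedralGroup n) :
    ¬ diffAdj (DihedralGroup.sr i) y := by
  rintro ⟨hc, h1, -⟩
  obtain ⟨g, ⟨k, hk⟩, l, hl⟩ := exists_gen_of_isCyclic hc
  cases g with
  | r j => simp at hk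
  | sr j =>
    have h2 : (DihedralGroup.sr j) ^ 2 = 1 := by rw [sq, DihedralGroup.sr_mul_self]
    have h2' : (DihedralGroup.sr j) ^ (2 : ℤ) = 1 := by exact_mod_cast h2
    rcases Int.even_or_odd' k with ⟨m, rfl | rfl⟩
    · rw [zpow_mul, h2', one_zpow, DihedralGroup.one_def] at hk
      cases hk
    · rw [zpow_add, zpow_mul, h2', one_zpow, one_mul, zpow_one] at hk
      exact h1 ⟨l, by rw [← hk, hl]⟩

theorem diffAdj_symm {G : Type*} [Group G] {x y : G} (h : diffAdj x y) : diffAdj y x := by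
  obtain ⟨h1, h2, h3⟩ := h
  refine ⟨?_, h3, h2⟩
  rwa [Set.pair_comm]

theorem diffAdj_r_iff {n : ℕ} (i j : ZMod n) :
    diffAdj (DihedralGroup.r i) (DihedralGroup.r j) ↔
      diffAdj (Multiplicative.ofAdd i) (Multiplicative.ofAdd j) := by
  have hp : ∀ i j : ZMod n, (∃ k : ℤ, DihedralGroup.r j = DihedralGroup.r i ^ k) ↔
      ∃ k : ℤ, Multiplicative.ofAdd j = Multiplicative.ofAdd i ^ k := by
    intro i j
    refine exists_congr fun k => ?_
    rw [← ofAdd_zsmul, DihedralGroup.r_zpow, DihedralGroup.r.injEq,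
      Multiplicative.ofAdd.injective.eq_iff, zsmul_eq_mul, mul_comm]
  have hr : ∀ i : ZMod n, DihedralGroup.r i ∈ Subgroup.zpowers (DihedralGroup.r (1 : ZMod n)) := by
    intro i
    obtain ⟨k, rfl⟩ := ZMod.intCast_surjective i
    exact ⟨k, by simp⟩
  have hm : ∀ i : ZMod n,
      Multiplicative.ofAdd i ∈ Subgroup.zpowers (Multiplicative.ofAdd (1 : ZMod n)) := by
    intro i
    obtain ⟨k, rfl⟩ := ZMod.intCast_surjective i
    exact ⟨k, by simp [← ofAdd_zsmul]⟩
  unfold diffAdj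
  rw [hp, hp]
  exact and_congr_left fun _ => ⟨fun _ => isCyclic_closure_of_mem (hm i) (hm j),
    fun _ => isCyclic_closure_of_mem (hr i) (hr j)⟩

theorem vertex_r_iff {n : ℕ} (i : ZMod n) :
    (∃ y, diffAdj (DihedralGroup.r i) y) ↔ ∃ y, diffAdj (Multiplicative.ofAdd i) y := by
  constructor
  · rintro ⟨y, hy⟩
    cases y with
    | r j => exact ⟨_, (diffAdj_r_iff i j).1 hy⟩
    | sr j => exact (not_diffAdj_sr _ _ (diffAdj_symm hy)).elim
  · rintro ⟨y, hy⟩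
    exact ⟨_, (diffAdj_r_iff i (Multiplicative.toAdd y)).2 hy⟩

/-- For `n ≥ 3` not a prime power, the difference graph of the dihedral group of order
`2n` is isomorphic to the difference graph of the cyclic group of order `n`. -/
theorem dihedral_diffGraph_iso_cyclic
    (n : ℕ) (hn : 3 ≤ n) (hpp : ¬ IsPrimePow n) :
    Nonempty (diffGraph (DihedralGroup n) ≃g diffGraph (Multiplicative (ZMod n))) := by
  let f : DiffVertex (Multiplicative (ZMod n)) → DiffVertex (DihedralGroup n) :=
    fun x => ⟨DihedralGroup.r (Multiplicative.toAdd x.1), (vertex_r_iff _).2 x.2⟩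
  have hinj : Function.Injective f := by
    rintro ⟨x, hx⟩ ⟨y, hy⟩ h
    have h' := congrArg Subtype.val h
    simp only [f, DihedralGroup.r.injEq] at h'
    exact Subtype.ext (Multiplicative.toAdd.injective h')
  have hsurj : Function.Surjective f := by
    rintro ⟨x, hx⟩
    cases x with
    | r i => exact ⟨⟨Multiplicative.ofAdd i, (vertex_r_iff i).1 hx⟩, rfl⟩
    | sr i => exact (not_diffAdj_sr _ _ hx.choose_spec).elim
  refine ⟨RelIso.symm ⟨Equiv.ofBijective f ⟨hinj, hsurj⟩, ?_⟩⟩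
  intro a b
  change (diffGraph _).Adj (f a) (f b) ↔ _
  simp only [diffGraph, SimpleGraph.fromRel_adj, hinj.ne_iff]
  exact and_congr_right fun _ => or_congr (diffAdj_r_iff _ _) (diffAdj_r_iff _ _)
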